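/- Let v : ℝ → ℝ → ℝ be a smooth function of (x,t) with v(x,t) ≠ 0 and v_x(x,t) ≠ 0 for all (x,t), satisfying the 3rd potential Kupershmidt equation v_t = v_{5x} - 5·v_{xx}v_{4x}/v_x + 5·v_{xx}²v_{xxx}/v_x². Then both K := -v_{xx}/v_x and K̄ := -v_{xx}/v_x + 2·v_x/v satisfy the Kupershmidt equation: K_t = K_{5x} - 5K_xK_{xxx} - 5K_{xx}² - 5K²K_{xxx} - 20KK_xK_{xx} - 5K_x³ + 5K⁴K_x, and likewise with K replaced by K̄. -/

import Mathlib

/-!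
With `a = v_xx / v_x`, the potential equation reads `v_t = v_x · P`, where `P = S_xx + 4 S²` and
`S = a_x - a² / 2` is the Schwarzian derivative of `v` (`kup3_schwarzian_form`). Differentiating
this in `x` and using `∂_t ∂_x = ∂_x ∂_t` gives `a_t = (a P + P_x)_x`, which is the Kupershmidt
equation for `K = -a` (`kupershmidt_of_schwarzian_form`).

For the second solution, put `u = -1 / v`. The Schwarzian derivative is invariant under Möbius
transformations and `u_t / u_x = v_t / v_x`, so `u` solves the same equation `u_t = u_x · P`.
Since `u_xx / u_x = a - 2 v_x / v`, the function attached to `u` is `K + 2 v_x / v`.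

Functions of `(x, t)` are treated as elements of the commutative ring `ℝ → ℝ → ℝ`, on whose smooth
elements `dx` and `dt` act as derivations.
-/

/-- Total `x`-derivative of a function of `(x, t)`. -/
noncomputable def dx (f : ℝ → ℝ → ℝ) : ℝ → ℝ → ℝ := fun x t => deriv (fun y => f y t) x

/-- Total `t`-derivative of a function of `(x, t)`. -/
noncomputable def dt (f : ℝ → ℝ → ℝ) : ℝ → ℝ → ℝ := fun x t => deriv (fun s => f x s) t

/-- The Kupershmidt equation. -/
def Kupershmidt (K : ℝ → ℝ → ℝ) : Prop :=
  ∀ x t, dt K x t =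
    dx (dx (dx (dx (dx K)))) x t
    - 5 * dx K x t * dx (dx (dx K)) x t
    - 5 * (dx (dx K) x t)^2
    - 5 * (K x t)^2 * dx (dx (dx K)) x t
    - 20 * K x t * dx K x t * dx (dx K) x t
    - 5 * (dx K x t)^3
    + 5 * (K x t)^4 * dx K x t

/-- The 3rd potential Kupershmidt equation. -/
def Kup3 (v : ℝ → ℝ → ℝ) : Prop :=
  ∀ x t, dt v x t =
    dx (dx (dx (dx (dx v)))) x t
    - 5 * dx (dx v) x t * dx (dx (dx (dx v))) x t / dx v x t
    + 5 * (dx (dx v) x t)^2 * dx (dx (dx v)) x t / (dx v x t)^2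

/-- Joint smoothness of a function of `(x, t)`. -/
def Smooth (f : ℝ → ℝ → ℝ) : Prop := ContDiff ℝ (⊤ : ℕ∞) (fun p : ℝ × ℝ => f p.1 p.2)

namespace Smooth

variable {f g : ℝ → ℝ → ℝ}

lemma add (hf : Smooth f) (hg : Smooth g) : Smooth (f + g) := ContDiff.add hf hg
lemma sub (hf : Smooth f) (hg : Smooth g) : Smooth (f - g) := ContDiff.sub hf hg
lemma mul (hf : Smooth f) (hg : Smooth g) : Smooth (f * g) := ContDiff.mul hf hg
lemma neg (hf : Smooth f) : Smooth (-f) := ContDiff.neg hf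

lemma const (c : ℝ) : Smooth (fun _ _ => c) := contDiff_const

lemma inv (hf : Smooth f) (h : ∀ x t, f x t ≠ 0) : Smooth (f⁻¹) :=
  ContDiff.inv hf (fun p => h p.1 p.2)

lemma hasDerivAt_x (hf : Smooth f) (x t : ℝ) :
    HasDerivAt (fun y => f y t) (fderiv ℝ (fun p : ℝ × ℝ => f p.1 p.2) (x, t) (1, 0)) x := by
  have h := (ContDiff.differentiable hf (by simp) (x, t)).hasFDerivAt
  exact h.comp_hasDerivAt x ((hasDerivAt_id x).prodMk (hasDerivAt_const x t))

lemma hasDerivAt_t (hf : Smooth f) (x t : ℝ) :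
    HasDerivAt (fun s => f x s) (fderiv ℝ (fun p : ℝ × ℝ => f p.1 p.2) (x, t) (0, 1)) t := by
  have h := (ContDiff.differentiable hf (by simp) (x, t)).hasFDerivAt
  exact h.comp_hasDerivAt t ((hasDerivAt_const t x).prodMk (hasDerivAt_id t))

lemma dx_eq (hf : Smooth f) :
    dx f = fun x t => fderiv ℝ (fun p : ℝ × ℝ => f p.1 p.2) (x, t) (1, 0) := by
  funext x t; exact (hf.hasDerivAt_x x t).deriv

lemma dt_eq (hf : Smooth f) :
    dt f = fun x t => fderiv ℝ (fun p : ℝ × ℝ => f p.1 p.2) (x, t) (0, 1) := by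
  funext x t; exact (hf.hasDerivAt_t x t).deriv

lemma fderiv_apply (hf : Smooth f) (w : ℝ × ℝ) :
    Smooth (fun x t => fderiv ℝ (fun p : ℝ × ℝ => f p.1 p.2) (x, t) w) :=
  (ContDiff.fderiv_right hf (m := (⊤ : ℕ∞)) (by simp)).clm_apply contDiff_const

lemma dx (hf : Smooth f) : Smooth (dx f) := by rw [hf.dx_eq]; exact hf.fderiv_apply _
lemma dt (hf : Smooth f) : Smooth (dt f) := by rw [hf.dt_eq]; exact hf.fderiv_apply _

lemma diff_x (hf : Smooth f) (x t : ℝ) : DifferentiableAt ℝ (fun y => f y t) x :=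
  (hf.hasDerivAt_x x t).differentiableAt

lemma diff_t (hf : Smooth f) (x t : ℝ) : DifferentiableAt ℝ (fun s => f x s) t :=
  (hf.hasDerivAt_t x t).differentiableAt

/-- Mixed partial derivatives commute: symmetry of the second derivative. -/
lemma dt_dx (hf : Smooth f) : _root_.dt (_root_.dx f) = _root_.dx (_root_.dt f) := by
  have h1 := hf.fderiv_apply (1, 0)
  have h2 := hf.fderiv_apply (0, 1)
  rw [hf.dx_eq, hf.dt_eq, h1.dt_eq, h2.dx_eq]
  funext x t
  have hd : DifferentiableAt ℝ (fderiv ℝ (fun p : ℝ × ℝ => f p.1 p.2)) (x, t) :=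
    (ContDiff.fderiv_right hf (m := (⊤ : ℕ∞)) (by simp)).differentiable (by simp) _
  have hs : IsSymmSndFDerivAt ℝ (fun p : ℝ × ℝ => f p.1 p.2) (x, t) :=
    ContDiffAt.isSymmSndFDerivAt (ContDiff.contDiffAt hf) (by
      rw [minSmoothness_of_isRCLikeNormedField]; exact WithTop.coe_le_coe.2 le_top)
  have key (w : ℝ × ℝ) : fderiv ℝ (fun p => fderiv ℝ (fun p : ℝ × ℝ => f p.1 p.2) p w) (x, t)
      = (fderiv ℝ (fderiv ℝ (fun p : ℝ × ℝ => f p.1 p.2)) (x, t)).flip w := by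
    rw [fderiv_clm_apply hd (differentiableAt_const w)]
    simp
  simpa [key] using hs.eq (0, 1) (1, 0)

end Smooth

section Derivations

variable {f g : ℝ → ℝ → ℝ}

lemma dx_add (hf : Smooth f) (hg : Smooth g) : dx (f + g) = dx f + dx g := by
  funext x t; exact deriv_add (hf.diff_x x t) (hg.diff_x x t)

lemma dx_sub (hf : Smooth f) (hg : Smooth g) : dx (f - g) = dx f - dx g := by
  funext x t; exact deriv_sub (hf.diff_x x t) (hg.diff_x x t)

lemma dx_mul (hf : Smooth f) (hg : Smooth g) : dx (f * g) = dx f * g + f * dx g := by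
  funext x t; exact deriv_mul (hf.diff_x x t) (hg.diff_x x t)

lemma dt_mul (hf : Smooth f) (hg : Smooth g) : dt (f * g) = dt f * g + f * dt g := by
  funext x t; exact deriv_mul (hf.diff_t x t) (hg.diff_t x t)

lemma dx_neg (f : ℝ → ℝ → ℝ) : dx (-f) = -dx f := by
  funext x t; exact deriv.neg

lemma dt_neg (f : ℝ → ℝ → ℝ) : dt (-f) = -dt f := by
  funext x t; exact deriv.neg

lemma dx_const (c : ℝ) : dx (fun _ _ => c) = 0 := by
  funext x t; exact deriv_const x c

lemma dt_const (c : ℝ) : dt (fun _ _ => c) = 0 := by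
  funext x t; exact deriv_const t c

lemma Smooth.ofNat (n : ℕ) [n.AtLeastTwo] : Smooth (OfNat.ofNat n) := Smooth.const _

lemma dx_ofNat (n : ℕ) [n.AtLeastTwo] : dx (OfNat.ofNat n) = 0 := dx_const _

end Derivations

/-- `v_t / v_x` as a differential polynomial in `a = v_xx / v_x`; it equals `S_xx + 4 S²` for
the Schwarzian derivative `S = a_x - a² / 2`. -/
noncomputable def flux (a : ℝ → ℝ → ℝ) : ℝ → ℝ → ℝ :=
  dx (dx (dx a)) - a * dx (dx a) + 3 * (dx a * dx a) - 4 * (a * a * dx a) + a * a * (a * a)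

/-- The differential polynomial `flux` depends on `a` only through twice the Schwarzian
derivative, `2 a_x - a²`. -/
lemma flux_schwarzian {a : ℝ → ℝ → ℝ} (ha : Smooth a) :
    2 * flux a = dx (dx (2 * dx a - a * a)) + 2 * ((2 * dx a - a * a) * (2 * dx a - a * a)) := by
  simp (maxDischargeDepth := 20) only
    [flux, dx_add, dx_sub, dx_mul, dx_ofNat 2, Smooth.add, Smooth.mul,
    Smooth.ofNat 2, Smooth.dx, ha, zero_mul, zero_add]
  ring

lemma smooth_flux {a : ℝ → ℝ → ℝ} (ha : Smooth a) : Smooth (flux a) := by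
  simp (maxDischargeDepth := 20) only
    [flux, Smooth.add, Smooth.sub, Smooth.mul, Smooth.ofNat 3, Smooth.ofNat 4, Smooth.dx, ha]

/-- The potential equation as `v_t = v_x · flux a`, with `a = v_xx / v_x`. -/
lemma kup3_schwarzian_form {v a : ℝ → ℝ → ℝ} (hv : Smooth v) (ha : Smooth a)
    (hvx : ∀ x t, dx v x t ≠ 0) (hav : dx (dx v) = a * dx v) (heq : Kup3 v) :
    dt v = dx v * flux a := by
  funext x t
  rw [heq x t]
  simp (maxDischargeDepth := 20) only
    [hav, dx_mul, dx_add, flux, Smooth.add, Smooth.mul, Smooth.dx, ha, hv]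
  simp only [Pi.add_apply, Pi.sub_apply, Pi.mul_apply, Pi.ofNat_apply]
  have := hvx x t
  field_simp
  ring

/-- Two `x`-derivatives of `v_t = v_x · flux a`, combined with `v_xx = a v_x`, give the evolution
`a_t = (a · flux a + (flux a)_x)_x`, which is the Kupershmidt equation for `-a`. -/
lemma kupershmidt_of_schwarzian_form {v a : ℝ → ℝ → ℝ} (hv : Smooth v) (ha : Smooth a)
    (hvx : ∀ x t, dx v x t ≠ 0) (hav : dx (dx v) = a * dx v) (hvt : dt v = dx v * flux a) :
    Kupershmidt (-a) := by
  have hP := smooth_flux ha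
  have h1 : dt (dx v) = dx v * (a * flux a + dx (flux a)) := by
    rw [hv.dt_dx, hvt, dx_mul hv.dx hP, hav]; ring
  have h2 : dt (dx (dx v)) =
      dx v * (a * (a * flux a + dx (flux a)) + dx (a * flux a + dx (flux a))) := by
    rw [hv.dx.dt_dx, h1, dx_mul hv.dx ((ha.mul hP).add hP.dx), hav]; ring
  have h3 : dt (dx (dx v)) = dt a * dx v + a * (dx v * (a * flux a + dx (flux a))) := by
    rw [hav, dt_mul ha hv.dx, h1]
  have h4 : dt a = dx (a * flux a + dx (flux a)) := by
    funext x t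
    have h := congrFun (congrFun (h3.symm.trans h2) x) t
    simp only [Pi.add_apply, Pi.mul_apply] at h ⊢
    apply mul_left_cancel₀ (hvx x t)
    linear_combination h
  intro x t
  rw [dt_neg, h4]
  simp (maxDischargeDepth := 20) only
    [flux, dx_neg, dx_add, dx_sub, dx_mul, dx_ofNat 3, dx_ofNat 4, 
    Smooth.add, Smooth.sub, Smooth.mul, Smooth.ofNat 3, Smooth.ofNat 4, Smooth.dx, ha, zero_mul, zero_add]
  simp only [Pi.add_apply, Pi.sub_apply, Pi.mul_apply, Pi.neg_apply, Pi.ofNat_apply]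
  ring

/-- Proposition 4 a): nonlocal invariance of the Kupershmidt equation,
`K = -[ln v_x]_x` and `K̄ = K + 2[ln v]_x` both solve the Kupershmidt equation. -/
theorem kupershmidt_nonlocal_invariance
    (v : ℝ → ℝ → ℝ)
    (hv : ContDiff ℝ (⊤ : ℕ∞) (fun p : ℝ × ℝ => v p.1 p.2))
    (hne : ∀ x t, v x t ≠ 0)
    (hvx : ∀ x t, dx v x t ≠ 0)
    (heq : Kup3 v) :
    Kupershmidt (fun x t => -(dx (dx v) x t) / dx v x t) ∧
    Kupershmidt (fun x t => -(dx (dx v) x t) / dx v x t + 2 * dx v x t / v x t) := by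
  have hs : Smooth v := hv
  obtain ⟨a, ha_def⟩ : ∃ a, a = dx (dx v) * (dx v)⁻¹ := ⟨_, rfl⟩
  obtain ⟨w, hw_def⟩ : ∃ w, w = v⁻¹ := ⟨_, rfl⟩
  have ha : Smooth a := ha_def ▸ hs.dx.dx.mul (hs.dx.inv hvx)
  have hw : Smooth w := hw_def ▸ hs.inv hne
  have hvw : v * w = 1 := by
    funext x t; simp [hw_def, hne x t]
  have hav : dx (dx v) = a * dx v := by
    funext x t; simp [ha_def, hvx x t]
  have hvt := kup3_schwarzian_form hs ha hvx hav heq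
  -- Derivatives of `w = 1 / v`, from differentiating `v * w = 1`.
  have hwx : dx w = -(dx v * w * w) := by
    have h := dx_mul hs hw
    rw [hvw, show dx 1 = 0 from dx_const 1] at h
    linear_combination (-w) * h - dx w * hvw
  have hwt : dt w = -(dt v * w * w) := by
    have h := dt_mul hs hw
    rw [hvw, show dt 1 = 0 from dt_const 1] at h
    linear_combination (-w) * h - dt w * hvw
  -- `b` is the logarithmic derivative of `v`; it satisfies the Riccati equation `hbx`.
  obtain ⟨b, hb_def⟩ : ∃ b, b = dx v * w := ⟨_, rfl⟩
  have hb : Smooth b := hb_def ▸ hs.dx.mul hw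
  have hbx : dx b = a * b - b * b := by
    rw [hb_def, dx_mul hs.dx hw, hav, hwx]; ring
  have hux : dx (-w) = b * w := by
    rw [dx_neg, hwx, hb_def]; ring
  have hab : Smooth (a - 2 * b) := ha.sub ((Smooth.ofNat 2).mul hb)
  -- Möbius invariance of the Schwarzian derivative.
  have hflux : flux (a - 2 * b) = flux a := by
    have hS : 2 * dx (a - 2 * b) - (a - 2 * b) * (a - 2 * b) = 2 * dx a - a * a := by
      rw [dx_sub ha ((Smooth.ofNat 2).mul hb), dx_mul (Smooth.ofNat 2) hb, dx_ofNat, hbx]; ring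
    have h := flux_schwarzian hab
    rw [hS, ← flux_schwarzian ha] at h
    funext x t
    simpa using congrFun (congrFun h x) t
  constructor
  · convert kupershmidt_of_schwarzian_form hs ha hvx hav hvt using 1
    funext x t
    simp [ha_def, div_eq_mul_inv]
  · have hK : Kupershmidt (-(a - 2 * b)) := by
      refine kupershmidt_of_schwarzian_form hw.neg hab ?_ ?_ ?_
      · intro x t
        rw [hux]
        simp [hb_def, hw_def, hne x t, hvx x t]
      · rw [hux, dx_mul hb hw, hbx, hwx, hb_def]; ring
      · rw [hflux, hux, dt_neg, hwt, hvt, hb_def]; ring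
    convert hK using 1
    funext x t
    simp [ha_def, hb_def, hw_def, div_eq_mul_inv]
    ring
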